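/- arXiv:2509.23399 — 3 statements merged into one kernel-verified Lean document; each statement's English description precedes it below -/
import Mathlib

section
/- Fix T > 0 and let A : [0,T] → (n×n real symmetric matrices) be twice differentiable, with first and second derivatives A'_t and A''_t. Suppose that for every t ∈ [0,T] one has A''_t ⪰ (A'_t)² in the Loewner order. Then for every unit vector w ∈ ℝⁿ the function [0,T] ∋ t ↦ e^{−⟨w, A_t w⟩} is concave on [0,T]. -/
open Matrix Set

/-- Differentiating the quadratic form entrywise. -/
theorem quad_deriv {n : ℕ} {S : Set ℝ} {t : ℝ} (A A' : ℝ → Matrix (Fin n) (Fin n) ℝ)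
    (h : ∀ i j, HasDerivWithinAt (fun s => A s i j) (A' t i j) S t) (w : Fin n → ℝ) :
    HasDerivWithinAt (fun s => w ⬝ᵥ (A s *ᵥ w)) (w ⬝ᵥ (A' t *ᵥ w)) S t := by
  simp only [dotProduct, mulVec]
  refine HasDerivWithinAt.fun_sum fun i _ => ?_
  refine HasDerivWithinAt.const_mul (w i) ?_
  refine HasDerivWithinAt.fun_sum fun j _ => ?_
  exact (h i j).mul_const (w j)

/-- If `A : [0,T] → Symₙ(ℝ)` is twice differentiable with
`A''_t ⪰ (A'_t)²` (Loewner order) for all `t ∈ [0,T]`, then for every unit vector `w`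
the map `t ↦ exp (-⟨w, A_t w⟩)` is concave on `[0,T]`. -/
theorem stmt_2 {n : ℕ} {T : ℝ} (hT : 0 < T)
    (A A' A'' : ℝ → Matrix (Fin n) (Fin n) ℝ)
    (hsymm : ∀ t ∈ Icc (0 : ℝ) T, (A t).IsSymm)
    (hA' : ∀ t ∈ Icc (0 : ℝ) T, ∀ i j,
      HasDerivWithinAt (fun s => A s i j) (A' t i j) (Icc (0 : ℝ) T) t)
    (hA'' : ∀ t ∈ Icc (0 : ℝ) T, ∀ i j,
      HasDerivWithinAt (fun s => A' s i j) (A'' t i j) (Icc (0 : ℝ) T) t)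
    (hLoewner : ∀ t ∈ Icc (0 : ℝ) T, (A'' t - (A' t) ^ 2).PosSemidef)
    (w : Fin n → ℝ) (hw : w ⬝ᵥ w = 1) :
    ConcaveOn ℝ (Icc (0 : ℝ) T) (fun t => Real.exp (-(w ⬝ᵥ (A t *ᵥ w)))) := by
  have hI : interior (Icc (0 : ℝ) T) ⊆ Icc 0 T := interior_subset
  have q1 := fun t ht => quad_deriv A A' (hA' t ht) w
  have q2 := fun t ht => quad_deriv A' A'' (hA'' t ht) w
  have hs' : ∀ t ∈ Icc (0 : ℝ) T, (A' t)ᵀ = A' t := by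
    intro t ht
    ext i j
    rw [transpose_apply]
    have hu := uniqueDiffOn_Icc hT t ht
    refine hu.eq_deriv _ (hA' t ht j i) ((hA' t ht i j).congr (fun s hs => ?_) ?_)
    · exact (hsymm s hs).apply i j
    · exact (hsymm t ht).apply i j
  have key : ∀ t ∈ Icc (0 : ℝ) T, (w ⬝ᵥ (A' t *ᵥ w)) ^ 2 ≤ w ⬝ᵥ (A'' t *ᵥ w) := by
    intro t ht
    have h1 := (hLoewner t ht).dotProduct_mulVec_nonneg w
    rw [star_trivial, sub_mulVec, dotProduct_sub, pow_two, ← mulVec_mulVec,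
      dotProduct_mulVec w (A' t) (A' t *ᵥ w), ← mulVec_transpose, hs' t ht] at h1
    have h2 : (w ⬝ᵥ (A' t *ᵥ w)) ^ 2 ≤ (w ⬝ᵥ w) * ((A' t *ᵥ w) ⬝ᵥ (A' t *ᵥ w)) := by
      simp only [dotProduct, ← pow_two]
      exact Finset.sum_mul_sq_le_sq_mul_sq _ _ _
    rw [hw] at h2
    linarith
  have e1 := fun t ht => ((q1 t ht).fun_neg).exp
  refine concaveOn_of_hasDerivWithinAt2_nonpos (convex_Icc 0 T)
    (fun t ht => (e1 t ht).continuousWithinAt)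
    (fun t ht => (e1 t (hI ht)).mono hI)
    (fun t ht => ((e1 t (hI ht)).mul (q2 t (hI ht)).fun_neg).mono hI) ?_
  intro t ht
  have hk := key t (hI ht)
  have he := Real.exp_pos (-(w ⬝ᵥ (A t *ᵥ w)))
  nlinarith [mul_nonneg he.le (sub_nonneg.2 hk)]
end

section
/- Let H : [0,1] → (n×n real symmetric matrices) be twice differentiable with H_0 = 0 and H''_t ⪰ (H'_t)² in the Loewner order for all t ∈ [0,1]. Then for every unit vector w ∈ ℝⁿ one has ⟨w, H'_0 w⟩ ≤ 1 − e^{−⟨w, H_1 w⟩}. -/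
open Matrix Set

lemma aux_deriv {n : ℕ} (H H' : ℝ → Matrix (Fin n) (Fin n) ℝ) (w : Fin n → ℝ) (s : Set ℝ) (t : ℝ)
    (h : ∀ i j, HasDerivWithinAt (fun s => H s i j) (H' t i j) s t) :
    HasDerivWithinAt (fun s => w ⬝ᵥ (H s *ᵥ w)) (w ⬝ᵥ (H' t *ᵥ w)) s t := by
  simp only [dotProduct, mulVec]
  refine HasDerivWithinAt.fun_sum fun i _ => ?_
  refine HasDerivWithinAt.const_mul _ ?_
  refine HasDerivWithinAt.fun_sum fun j _ => ?_
  exact (h i j).mul_const _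

lemma aux_sq {n : ℕ} (A B : Matrix (Fin n) (Fin n) ℝ) (hA : A.IsSymm)
    (h : (B - A ^ 2).PosSemidef) (w : Fin n → ℝ) (hw : w ⬝ᵥ w = 1) :
    (w ⬝ᵥ (A *ᵥ w)) ^ 2 ≤ w ⬝ᵥ (B *ᵥ w) := by
  have h1 := h.dotProduct_mulVec_nonneg w
  have h2 : w ⬝ᵥ (A ^ 2 *ᵥ w) = (A *ᵥ w) ⬝ᵥ (A *ᵥ w) := by
    rw [pow_two, ← mulVec_mulVec, dotProduct_mulVec, ← mulVec_transpose, hA.eq]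
  have h3 : (w ⬝ᵥ (A *ᵥ w)) ^ 2 ≤ (w ⬝ᵥ w) * ((A *ᵥ w) ⬝ᵥ (A *ᵥ w)) := by
    have := Finset.sum_mul_sq_le_sq_mul_sq Finset.univ w (A *ᵥ w)
    simpa only [dotProduct, pow_two] using this
  rw [star_trivial, sub_mulVec, dotProduct_sub, h2] at h1
  rw [hw] at h3
  linarith

lemma aux_scalar (h h' h'' : ℝ → ℝ)
    (d1 : ∀ t ∈ Icc (0 : ℝ) 1, HasDerivWithinAt h (h' t) (Icc 0 1) t)
    (d2 : ∀ t ∈ Icc (0 : ℝ) 1, HasDerivWithinAt h' (h'' t) (Icc 0 1) t)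
    (h0 : h 0 = 0) (hc : ∀ t ∈ Icc (0 : ℝ) 1, (h' t) ^ 2 ≤ h'' t) :
    h' 0 ≤ 1 - Real.exp (-(h 1)) := by
  have e1 : ∀ t ∈ Icc (0 : ℝ) 1, HasDerivWithinAt (fun s => Real.exp (-(h s)))
      (Real.exp (-(h t)) * -(h' t)) (Icc 0 1) t := fun t ht => (d1 t ht).fun_neg.exp
  have e2 : ∀ t ∈ Icc (0 : ℝ) 1, HasDerivWithinAt (fun s => Real.exp (-(h s)) * -(h' s))
      (Real.exp (-(h t)) * -(h' t) * -(h' t) + Real.exp (-(h t)) * -(h'' t)) (Icc 0 1) t :=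
    fun t ht => (e1 t ht).fun_mul (d2 t ht).fun_neg
  have a2 : AntitoneOn (fun s => Real.exp (-(h s)) * -(h' s)) (Icc 0 1) := by
    refine antitoneOn_of_hasDerivWithinAt_nonpos (convex_Icc 0 1)
      (fun t ht => (e2 t ht).continuousWithinAt)
      (fun t ht => (e2 t (interior_subset ht)).mono interior_subset) fun t ht => ?_
    have := hc t (interior_subset ht)
    have hp := Real.exp_pos (-(h t))
    nlinarith
  have e3 : ∀ t ∈ Icc (0 : ℝ) 1, HasDerivWithinAt (fun s => Real.exp (-(h s)) + h' 0 * s)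
      (Real.exp (-(h t)) * -(h' t) + h' 0 * 1) (Icc 0 1) t :=
    fun t ht => (e1 t ht).fun_add ((hasDerivWithinAt_id t _).const_mul (h' 0))
  have a3 : AntitoneOn (fun s => Real.exp (-(h s)) + h' 0 * s) (Icc 0 1) := by
    refine antitoneOn_of_hasDerivWithinAt_nonpos (convex_Icc 0 1)
      (fun t ht => (e3 t ht).continuousWithinAt)
      (fun t ht => (e3 t (interior_subset ht)).mono interior_subset) fun t ht => ?_
    have ht' := interior_subset ht
    have := a2 (left_mem_Icc.2 zero_le_one) ht' ht'.1
    simp only [h0, neg_zero, Real.exp_zero] at this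
    linarith
  have := a3 (left_mem_Icc.2 zero_le_one) (right_mem_Icc.2 zero_le_one) zero_le_one
  simp only [h0, neg_zero, Real.exp_zero] at this
  linarith

/-- If `H : [0,1] → Symₙ(ℝ)` is twice differentiable with `H_0 = 0` and
`H''_t ⪰ (H'_t)²`, then for every unit vector `w` one has
`⟨w, H'_0 w⟩ ≤ 1 - exp (-⟨w, H_1 w⟩)`. -/
theorem stmt_8 {n : ℕ} (H H' H'' : ℝ → Matrix (Fin n) (Fin n) ℝ)
    (hsymm : ∀ t ∈ Icc (0 : ℝ) 1, (H t).IsSymm)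
    (hH' : ∀ t ∈ Icc (0 : ℝ) 1, ∀ i j,
      HasDerivWithinAt (fun s => H s i j) (H' t i j) (Icc (0 : ℝ) 1) t)
    (hH'' : ∀ t ∈ Icc (0 : ℝ) 1, ∀ i j,
      HasDerivWithinAt (fun s => H' s i j) (H'' t i j) (Icc (0 : ℝ) 1) t)
    (hH0 : H 0 = 0)
    (hLoewner : ∀ t ∈ Icc (0 : ℝ) 1, (H'' t - (H' t) ^ 2).PosSemidef)
    (w : Fin n → ℝ) (hw : w ⬝ᵥ w = 1) :
    w ⬝ᵥ (H' 0 *ᵥ w) ≤ 1 - Real.exp (-(w ⬝ᵥ (H 1 *ᵥ w))) := by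
  have hs : ∀ t ∈ Icc (0 : ℝ) 1, (H' t).IsSymm := by
    intro t ht
    ext i j
    rw [transpose_apply]
    refine (uniqueDiffOn_Icc zero_lt_one t ht).eq_deriv _ (hH' t ht j i) ?_
    exact (hH' t ht i j).congr (fun s hs => (hsymm s hs).apply i j) ((hsymm t ht).apply i j)
  refine aux_scalar (fun t => w ⬝ᵥ (H t *ᵥ w)) (fun t => w ⬝ᵥ (H' t *ᵥ w))
    (fun t => w ⬝ᵥ (H'' t *ᵥ w)) (fun t ht => aux_deriv H H' w _ t (hH' t ht))
    (fun t ht => aux_deriv H' H'' w _ t (hH'' t ht)) ?_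
    (fun t ht => aux_sq _ _ (hs t ht) (hLoewner t ht) w hw)
  simp [hH0]
end

section
/- Fix T > 0 and n ≥ 1, and let A : [0,T] → (n×n real symmetric matrices) be twice differentiable with A''_t ⪰ (A'_t)² in the Loewner order for all t ∈ [0,T]. Then the function [0,T] ∋ t ↦ e^{−tr(A_t)/n} is concave on [0,T]. -/
open Matrix Set

/-- If `A : [0,T] → Symₙ(ℝ)` (with `n ≥ 1`) is twice differentiable with
`A''_t ⪰ (A'_t)²` (Loewner order) for all `t ∈ [0,T]`, then `t ↦ exp (-tr (A_t) / n)` is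
concave on `[0,T]`. -/
theorem stmt_18 {n : ℕ} (hn : 1 ≤ n) {T : ℝ} (hT : 0 < T)
    (A A' A'' : ℝ → Matrix (Fin n) (Fin n) ℝ)
    (hsymm : ∀ t ∈ Icc (0 : ℝ) T, (A t).IsSymm)
    (hA' : ∀ t ∈ Icc (0 : ℝ) T, ∀ i j,
      HasDerivWithinAt (fun s => A s i j) (A' t i j) (Icc (0 : ℝ) T) t)
    (hA'' : ∀ t ∈ Icc (0 : ℝ) T, ∀ i j,
      HasDerivWithinAt (fun s => A' s i j) (A'' t i j) (Icc (0 : ℝ) T) t)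
    (hLoewner : ∀ t ∈ Icc (0 : ℝ) T, (A'' t - (A' t) ^ 2).PosSemidef) :
    ConcaveOn ℝ (Icc (0 : ℝ) T) (fun t => Real.exp (-(A t).trace / n)) := by
  have hn0 : (0 : ℝ) < n := by exact_mod_cast hn
  have hd1 : ∀ t ∈ Icc (0 : ℝ) T,
      HasDerivWithinAt (fun s => (A s).trace) ((A' t).trace) (Icc (0 : ℝ) T) t := by
    intro t ht
    simp only [Matrix.trace, Matrix.diag]
    exact HasDerivWithinAt.fun_sum fun i _ => hA' t ht i i
  have hd2 : ∀ t ∈ Icc (0 : ℝ) T,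
      HasDerivWithinAt (fun s => (A' s).trace) ((A'' t).trace) (Icc (0 : ℝ) T) t := by
    intro t ht
    simp only [Matrix.trace, Matrix.diag]
    exact HasDerivWithinAt.fun_sum fun i _ => hA'' t ht i i
  have hs' : ∀ t ∈ Icc (0 : ℝ) T, ∀ i j, A' t j i = A' t i j := by
    intro t ht i j
    have h1 := hA' t ht i j
    have h2 : HasDerivWithinAt (fun s => A s i j) (A' t j i) (Icc (0 : ℝ) T) t :=
      (hA' t ht j i).congr (fun s hs => ((hsymm s hs).apply i j).symm)
        ((hsymm t ht).apply i j).symm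
    exact ((uniqueDiffOn_Icc hT) t ht).eq_deriv _ h2 h1
  have key : ∀ t ∈ Icc (0 : ℝ) T, (A' t).trace ^ 2 ≤ n * (A'' t).trace := by
    intro t ht
    have h1 := (hLoewner t ht).trace_nonneg
    rw [Matrix.trace_sub, sub_nonneg] at h1
    have h2 : ∑ i, (A' t i i) ^ 2 ≤ ((A' t) ^ 2).trace := by
      simp only [Matrix.trace, Matrix.diag, pow_two, Matrix.mul_apply]
      refine Finset.sum_le_sum fun i _ => ?_
      refine Finset.single_le_sum (f := fun j => A' t i j * A' t j i) (fun j _ => ?_)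
        (Finset.mem_univ i)
      simp only [hs' t ht i j]
      exact mul_self_nonneg _
    have h3 : (A' t).trace ^ 2 ≤ n * ∑ i, (A' t i i) ^ 2 := by
      have := sq_sum_le_card_mul_sum_sq (s := Finset.univ) (f := fun i => A' t i i)
      simpa [Matrix.trace] using this
    exact h3.trans (mul_le_mul_of_nonneg_left (h2.trans h1) hn0.le)
  have he : ∀ t ∈ Icc (0 : ℝ) T, HasDerivWithinAt (fun s => Real.exp (-(A s).trace / n))
      (Real.exp (-(A t).trace / n) * (-(A' t).trace / n)) (Icc (0 : ℝ) T) t :=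
    fun t ht => ((hd1 t ht).fun_neg.div_const _).exp
  refine concaveOn_of_hasDerivWithinAt2_nonpos (convex_Icc 0 T)
    (f' := fun t => Real.exp (-(A t).trace / n) * (-(A' t).trace / n))
    (f'' := fun t => Real.exp (-(A t).trace / n) * (-(A' t).trace / n) * (-(A' t).trace / n)
      + Real.exp (-(A t).trace / n) * (-(A'' t).trace / n))
    (fun t ht => (he t ht).continuousWithinAt)
    (fun t ht => (he t (interior_subset ht)).mono interior_subset)
    (fun t ht => ((he t (interior_subset ht)).fun_mul
      ((hd2 t (interior_subset ht)).fun_neg.div_const _)).mono interior_subset) ?_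
  intro t ht
  have hk := key t (interior_subset ht)
  have : Real.exp (-(A t).trace / n) * (-(A' t).trace / n) * (-(A' t).trace / n)
      + Real.exp (-(A t).trace / n) * (-(A'' t).trace / n)
      = Real.exp (-(A t).trace / n) * (((A' t).trace ^ 2 - n * (A'' t).trace) / n ^ 2) := by
    field_simp
    ring
  simp only [this]
  exact mul_nonpos_of_nonneg_of_nonpos (Real.exp_pos _).le
    (div_nonpos_of_nonpos_of_nonneg (by linarith) (by positivity))
end
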